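/- Let d ≥ 1, g ≥ 1 and D : Fin g → ℕ with D k ≥ 1 for all k. Suppose given, for each k ∈ Fin g, families A k : Fin d → Fin d → Matrix (Fin (D k)) (Fin (D k)) ℂ and Ainv k : Fin d → Fin d → Matrix (Fin (D k)) (Fin (D k)) ℂ satisfying the biorthogonality relation: for all k, l ∈ Fin g, all a, b ∈ Fin (D k) and all a', b' ∈ Fin (D l), Σ_{i, j ∈ Fin d} ((A k)^{i j})_{a b} · ((Ainv l)^{i j})_{a' b'} equals δ_{a a'} · δ_{b b'} if k = l and 0 otherwise. Let b k ∈ Matrix (Fin (D k)) (Fin (D k)) ℂ be invertible for every k. If the matrices v k ∈ Matrix (Fin (D k)) (Fin (D k)) ℂ satisfy Σ_{k ∈ Fin g} trace((A k)^{i j} * (v k)ᵀ * (b k)) = 0 for all i, j ∈ Fin d, then v k = 0 for every k. -/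

import Mathlib

open Matrix

/-!
Contracting the physical index of `A k` with the inverse tensor `Ainv l` turns the functionals
`X ↦ ∑ k, tr (A k s * X k)` into the map `X ↦ (X l)ᵀ`. Thus these functionals determine every
block `X l`. Taking `X k = (v k)ᵀ * bdry k`, which determines `v k` because `bdry k` is invertible,
gives the theorem.
-/

section BlockBiorthogonality

variable {κ σ R : Type*} {m n : κ → Type*} [Fintype σ] [CommSemiring R]

/-- Biorthogonality of a family of tensors `A k` to their inverse tensors `Ainv k`: the pairing over
the physical index `σ` is the identity within a block and zero across blocks, so that contracting
with `Ainv l` isolates block `l`. The two physical legs of a matrix product operator are encoded by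
taking `σ` to be a product. -/
structure IsBlockBiorthogonal [∀ k, DecidableEq (m k)] [∀ k, DecidableEq (n k)]
    (A Ainv : (k : κ) → σ → Matrix (m k) (n k) R) : Prop where
  same (k : κ) (a : m k) (b : n k) (a' : m k) (b' : n k) :
    ∑ s, A k s a b * Ainv k s a' b' = (if a = a' then 1 else 0) * (if b = b' then 1 else 0)
  of_ne (k l : κ) : k ≠ l → ∀ (a : m k) (b : n k) (a' : m l) (b' : n l),
    ∑ s, A k s a b * Ainv l s a' b' = 0

theorem sum_trace_mul_smul {p q M : Type*} [Fintype p] [Fintype q] [AddCommMonoid M] [Module R M]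
    (T : σ → Matrix p q R) (X : Matrix q p R) (c : σ → M) :
    ∑ s, trace (T s * X) • c s = ∑ a, ∑ b, X b a • ∑ s, T s a b • c s := by
  calc ∑ s, trace (T s * X) • c s
      = ∑ s, ∑ a, ∑ b, X b a • T s a b • c s := by
        simp only [trace, diag_apply, mul_apply, Finset.sum_smul, smul_smul, mul_comm]
    _ = ∑ a, ∑ b, ∑ s, X b a • T s a b • c s := by
        rw [Finset.sum_comm]
        exact Finset.sum_congr rfl fun a _ ↦ Finset.sum_comm
    _ = ∑ a, ∑ b, X b a • ∑ s, T s a b • c s := by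
        simp only [Finset.smul_sum]

namespace IsBlockBiorthogonal

variable [∀ k, DecidableEq (m k)] [∀ k, DecidableEq (n k)]
  {A Ainv : (k : κ) → σ → Matrix (m k) (n k) R}

theorem sum_smul_eq_single (h : IsBlockBiorthogonal A Ainv) (k : κ) (a : m k) (b : n k) :
    ∑ s, A k s a b • Ainv k s = single a b 1 := by
  ext a' b'
  simp only [Matrix.sum_apply, Matrix.smul_apply, smul_eq_mul, h.same, single_apply, ite_and,
    ite_mul, one_mul, zero_mul]

theorem sum_smul_of_ne (h : IsBlockBiorthogonal A Ainv) {k l : κ} (hkl : k ≠ l)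
    (a : m k) (b : n k) : ∑ s, A k s a b • Ainv l s = 0 := by
  ext a' b'
  simp [Matrix.sum_apply, h.of_ne k l hkl]

variable [∀ k, Fintype (m k)] [∀ k, Fintype (n k)]

theorem sum_trace_mul_smul_self (h : IsBlockBiorthogonal A Ainv) (k : κ)
    (X : Matrix (n k) (m k) R) : ∑ s, trace (A k s * X) • Ainv k s = Xᵀ := by
  simp only [sum_trace_mul_smul, h.sum_smul_eq_single, smul_single, smul_eq_mul, mul_one]
  exact (matrix_eq_sum_single Xᵀ).symm

theorem sum_trace_mul_smul_of_ne (h : IsBlockBiorthogonal A Ainv) {k l : κ} (hkl : k ≠ l)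
    (X : Matrix (n k) (m k) R) : ∑ s, trace (A k s * X) • Ainv l s = 0 := by
  simp only [sum_trace_mul_smul, h.sum_smul_of_ne hkl, smul_zero, Finset.sum_const_zero]

variable [Fintype κ]

theorem sum_sum_trace_mul_smul (h : IsBlockBiorthogonal A Ainv)
    (X : (k : κ) → Matrix (n k) (m k) R) (l : κ) :
    ∑ s, (∑ k, trace (A k s * X k)) • Ainv l s = (X l)ᵀ := by
  calc ∑ s, (∑ k, trace (A k s * X k)) • Ainv l s
      = ∑ k, ∑ s, trace (A k s * X k) • Ainv l s := by
        simp only [Finset.sum_smul]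
        exact Finset.sum_comm
    _ = ∑ s, trace (A l s * X l) • Ainv l s :=
        Fintype.sum_eq_single l fun k hkl ↦ h.sum_trace_mul_smul_of_ne hkl (X k)
    _ = (X l)ᵀ := h.sum_trace_mul_smul_self l (X l)

theorem eq_zero_of_sum_trace_mul_eq_zero (h : IsBlockBiorthogonal A Ainv)
    {X : (k : κ) → Matrix (n k) (m k) R} (hX : ∀ s, ∑ k, trace (A k s * X k) = 0) (l : κ) :
    X l = 0 := by
  have hXl := h.sum_sum_trace_mul_smul X l
  simp only [hX, zero_smul, Finset.sum_const_zero] at hXl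
  exact transpose_eq_zero.mp hXl.symm

end IsBlockBiorthogonal

theorem block_diagonal_mpu_boundary_full_rank_general [Fintype κ]
    [∀ k, Fintype (m k)] [∀ k, Fintype (n k)] [∀ k, DecidableEq (m k)] [∀ k, DecidableEq (n k)]
    {A Ainv : (k : κ) → σ → Matrix (m k) (n k) R} (h : IsBlockBiorthogonal A Ainv)
    {bdry : (k : κ) → Matrix (m k) (m k) R} (hbdry : ∀ k, IsUnit (bdry k))
    {v : (k : κ) → Matrix (m k) (n k) R}
    (hv : ∀ s, ∑ k, trace (A k s * (v k)ᵀ * bdry k) = 0) (k : κ) : v k = 0 := by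
  simp only [Matrix.mul_assoc] at hv
  have hvb : (v k)ᵀ * bdry k = 0 := h.eq_zero_of_sum_trace_mul_eq_zero hv k
  obtain ⟨c, hc⟩ := (hbdry k).exists_right_inv
  refine transpose_eq_zero.mp ?_
  calc (v k)ᵀ = (v k)ᵀ * bdry k * c := by rw [Matrix.mul_assoc, hc, Matrix.mul_one]
    _ = 0 := by rw [hvb, Matrix.zero_mul]

end BlockBiorthogonality

/-- **Block-diagonal uniform-bulk MPUs satisfy Assumption 1** (supplemental material):
if the blocks `A k` form a biorthogonal family (a basis of normal tensors with inverse
tensors `Ainv k`), the block boundary operators `bdry k` are invertible, and the matrices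
`v k` satisfy `∑ k, tr (A k i j * (v k)ᵀ * bdry k) = 0` for all physical indices `i, j`,
then all `v k` vanish. -/
theorem block_diagonal_mpu_boundary_full_rank (d g : ℕ) (hd : 1 ≤ d) (hg : 1 ≤ g)
    (D : Fin g → ℕ) (hD : ∀ k, 1 ≤ D k)
    (A Ainv : (k : Fin g) → Fin d → Fin d → Matrix (Fin (D k)) (Fin (D k)) ℂ)
    (hbi_same : ∀ (k : Fin g) (a b a' b' : Fin (D k)),
      (∑ i : Fin d, ∑ j : Fin d, A k i j a b * Ainv k i j a' b')
        = (if a = a' then 1 else 0) * (if b = b' then 1 else 0))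
    (hbi_diff : ∀ (k l : Fin g), k ≠ l → ∀ (a b : Fin (D k)) (a' b' : Fin (D l)),
      (∑ i : Fin d, ∑ j : Fin d, A k i j a b * Ainv l i j a' b') = 0)
    (bdry : (k : Fin g) → Matrix (Fin (D k)) (Fin (D k)) ℂ)
    (hbdry : ∀ k, IsUnit (bdry k))
    (v : (k : Fin g) → Matrix (Fin (D k)) (Fin (D k)) ℂ)
    (hv : ∀ i j : Fin d, (∑ k : Fin g, (A k i j * (v k)ᵀ * bdry k).trace) = 0) :
    ∀ k, v k = 0 := by
  have h : IsBlockBiorthogonal (σ := Fin d × Fin d)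
      (fun k s ↦ A k s.1 s.2) (fun k s ↦ Ainv k s.1 s.2) :=
    ⟨by simpa only [Fintype.sum_prod_type] using hbi_same,
      by simpa only [Fintype.sum_prod_type] using hbi_diff⟩
  exact block_diagonal_mpu_boundary_full_rank_general h hbdry fun s ↦ hv s.1 s.2
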